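/- For every t = (t_1,…,t_N) ∈ ℝ^N one has M_{1,1}(A(t)) = (∏_{i=1}^{N−1} t_i²)·t_N. -/

import Mathlib

noncomputable section

open Matrix

/-- `N = n(n-1)/2`, the number of parameters. -/
def Npar (n : ℕ) : ℕ := n * (n - 1) / 2

/-- The decreasing run `a, a-1, …, b` (empty if `b > a`). -/
def decRun (a b : ℕ) : List ℕ := (List.range' b (a + 1 - b)).reverse

/-- The index sequence `(i_1, …, i_N)`: for `m = 1, …, ⌊n/2⌋` (here `m` is 0-based, so
`m+1` is the 1-based block index), concatenate `n`, the run `n-2, …, 2(m+1)-1`, and the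
run `n-1, …, 2(m+1)`. -/
def wordD (n : ℕ) : List ℕ :=
  ((List.range (n / 2)).map (fun m =>
    n :: (decRun (n - 2) (2 * m + 1) ++ decRun (n - 1) (2 * m + 2)))).flatten

/-- The matrix `x_i(t)` (index `i` is 1-based, matrix positions are 1-based in the paper,
0-based here). -/
def xMat (n : ℕ) (i : ℕ) (t : ℝ) : Matrix (Fin (2 * n)) (Fin (2 * n)) ℝ :=
  Matrix.of fun p q =>
    (if (p : ℕ) = (q : ℕ) then 1 else 0) +
    (if i < n then
        (if (p : ℕ) + 1 = i ∧ (q : ℕ) + 1 = i + 1 then t else 0)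
      + (if (p : ℕ) + 1 = n + i + 1 ∧ (q : ℕ) + 1 = n + i then -t else 0)
     else
        (if (p : ℕ) + 1 = n - 1 ∧ (q : ℕ) + 1 = 2 * n then t else 0)
      + (if (p : ℕ) + 1 = n ∧ (q : ℕ) + 1 = 2 * n - 1 then -t else 0))

/-- The product `x_{i_1}(t_1) ⋯ x_{i_N}(t_N)`; the parameter `t l` plays the role of
`t_{l+1}`. -/
def prodX (n : ℕ) (t : ℕ → ℝ) : Matrix (Fin (2 * n)) (Fin (2 * n)) ℝ :=
  ((List.range (Npar n)).map (fun l => xMat n ((wordD n).getD l 0) (t l))).prod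

/-- The first block `X₁(t)` of the first `n` rows of the product. -/
def X1 (n : ℕ) (t : ℕ → ℝ) : Matrix (Fin n) (Fin n) ℝ :=
  Matrix.of fun p q =>
    prodX n t ⟨(p : ℕ), by have := p.isLt; omega⟩ ⟨(q : ℕ), by have := q.isLt; omega⟩

/-- The second block `X₂(t)` of the first `n` rows of the product. -/
def X2 (n : ℕ) (t : ℕ → ℝ) : Matrix (Fin n) (Fin n) ℝ :=
  Matrix.of fun p q =>
    prodX n t ⟨(p : ℕ), by have := p.isLt; omega⟩ ⟨n + (q : ℕ), by have := q.isLt; omega⟩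

/-- The skew-symmetric matrix `A(t) = X₁(t)⁻¹ · X₂(t)`. -/
def Amat (n : ℕ) (t : ℕ → ℝ) : Matrix (Fin n) (Fin n) ℝ := (X1 n t)⁻¹ * X2 n t

/-- The set `S_n^{>0}` of totally positive skew-symmetric matrices. -/
def Spos (n : ℕ) : Set (Matrix (Fin n) (Fin n) ℝ) :=
  { A | ∃ t : ℕ → ℝ, (∀ i < Npar n, 0 < t i) ∧ A = Amat n t }

/-- The signed minor `M_{j,k}(A)`: `(-1)^{jk}` times the determinant of the submatrix of `A`
with (1-based) rows `{1,…,n-k-1} ∪ {n-k+j,…,n}` and columns `{1,…,n-j}`. -/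
def Mminor (n j k : ℕ) (A : Matrix (Fin n) (Fin n) ℝ) : ℝ :=
  (-1 : ℝ) ^ (j * k) *
    Matrix.det (Matrix.of fun (p q : Fin (n - j)) =>
      A (if (p : ℕ) < n - k - 1
          then ⟨(p : ℕ), by have := p.isLt; omega⟩
          else ⟨(p : ℕ) + j, by have := p.isLt; omega⟩)
        ⟨(q : ℕ), by have := q.isLt; omega⟩)

/-- The Pfaffian of an `m × m` matrix (intended for `m` even):
`Pf(B) = (1/(2^{m/2} (m/2)!)) Σ_σ sgn(σ) Π_i B_{σ(2i-1), σ(2i)}`. -/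
def Pfaff {m : ℕ} (B : Matrix (Fin m) (Fin m) ℝ) : ℝ :=
  (1 / ((2 : ℝ) ^ (m / 2) * (Nat.factorial (m / 2) : ℝ))) *
    ∑ σ : Equiv.Perm (Fin m), ((Equiv.Perm.sign σ : ℤ) : ℝ) *
      ∏ i : Fin (m / 2),
        B (σ ⟨2 * (i : ℕ), by have := i.isLt; omega⟩)
          (σ ⟨2 * (i : ℕ) + 1, by have := i.isLt; omega⟩)

/-- `Pf_I(A)`: the Pfaffian of the submatrix of `A` with rows and columns indexed by `I`
in increasing order. -/
def PfI {n : ℕ} (A : Matrix (Fin n) (Fin n) ℝ) (I : Finset (Fin n)) : ℝ :=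
  Pfaff (Matrix.of fun (p q : Fin I.card) =>
    A ((I.orderIsoOfFin rfl p : Fin n)) ((I.orderIsoOfFin rfl q : Fin n)))

/-- `sgn(I,[n]) = (-1)^{(Σ_{i∈I} i) - |I|(|I|+1)/2}` (the elements of `I` are 1-based, so a
0-based element `i` contributes `i+1`; the natural subtraction agrees with the integer one
since the sum of `|I|` distinct positive integers is at least `|I|(|I|+1)/2`). -/
def sgnSet {n : ℕ} (I : Finset (Fin n)) : ℝ :=
  (-1 : ℝ) ^ ((∑ i ∈ I, ((i : ℕ) + 1)) - I.card * (I.card + 1) / 2)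

/-- The block matrix `[Id_n | A]`. -/
def IdA {n : ℕ} (A : Matrix (Fin n) (Fin n) ℝ) : Matrix (Fin n) (Fin (2 * n)) ℝ :=
  Matrix.of fun p q =>
    if h : (q : ℕ) < n then (if (p : ℕ) = (q : ℕ) then 1 else 0)
    else A p ⟨(q : ℕ) - n, by have := q.isLt; omega⟩

/-- The full word `(j_1, …, j_{2N})`: `1, 2,1, 3,2,1, …, n-1,…,1` followed by `(i_1,…,i_N)`. -/
def wordFull (n : ℕ) : List ℕ :=
  (((List.range n).map (fun r => decRun r 1)).flatten) ++ wordD n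

/-- `z(ε) = x_{j_1}(ε) ⋯ x_{j_{2N}}(ε)`. -/
def zeps (n : ℕ) (ε : ℝ) : Matrix (Fin (2 * n)) (Fin (2 * n)) ℝ :=
  ((wordFull n).map (fun i => xMat n i ε)).prod

/-- `Z(ε) = z(ε)ᵀ · z(ε)`. -/
def Zeps (n : ℕ) (ε : ℝ) : Matrix (Fin (2 * n)) (Fin (2 * n)) ℝ :=
  (zeps n ε)ᵀ * zeps n ε

/-- First block `Y₁(ε)` of `[Id_n | A] · Z(ε)`. -/
def Y1 {n : ℕ} (A : Matrix (Fin n) (Fin n) ℝ) (ε : ℝ) : Matrix (Fin n) (Fin n) ℝ :=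
  Matrix.of fun p q => (IdA A * Zeps n ε) p ⟨(q : ℕ), by have := q.isLt; omega⟩

/-- Second block `Y₂(ε)` of `[Id_n | A] · Z(ε)`. -/
def Y2 {n : ℕ} (A : Matrix (Fin n) (Fin n) ℝ) (ε : ℝ) : Matrix (Fin n) (Fin n) ℝ :=
  Matrix.of fun p q => (IdA A * Zeps n ε) p ⟨n + (q : ℕ), by have := q.isLt; omega⟩

/-- The simple generators `s_i` of the Weyl group `W` of `SO(2n)`, as permutations of
`{1,…,2n}` (0-based here): for `1 ≤ i ≤ n-1`, `s_i = (i,i+1)(n+i,n+i+1)`; for `i = n`,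
`s_n = (n,2n-1)(n-1,2n)`. -/
def sGen (n : ℕ) (i : ℕ) : Equiv.Perm (Fin (2 * n)) :=
  if h : 1 ≤ i ∧ i ≤ n - 1 ∧ 2 ≤ n then
    Equiv.swap ⟨i - 1, by omega⟩ ⟨i, by omega⟩ *
      Equiv.swap ⟨n + i - 1, by omega⟩ ⟨n + i, by omega⟩
  else if h2 : i = n ∧ 2 ≤ n then
    Equiv.swap ⟨n - 1, by omega⟩ ⟨2 * n - 2, by omega⟩ *
      Equiv.swap ⟨n - 2, by omega⟩ ⟨2 * n - 1, by omega⟩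
  else 1

/-- Membership in the Weyl group `W`: `σ(n+i) ≡ n + σ(i) (mod 2n)` for all `1 ≤ i ≤ n`,
and the number of `i ∈ {1,…,n}` with `σ(i) > n` is even. (All positions are 0-based; a
0-based value `v` corresponds to the 1-based value `v+1`.) -/
def inW (n : ℕ) (σ : Equiv.Perm (Fin (2 * n))) : Prop :=
  (∀ i : Fin n,
    ((σ ⟨n + (i : ℕ), by have := i.isLt; omega⟩ : Fin (2 * n)) : ℕ)
      ≡ n + ((σ ⟨(i : ℕ), by have := i.isLt; omega⟩ : Fin (2 * n)) : ℕ) [MOD 2 * n]) ∧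
  Even (Finset.univ.filter (fun i : Fin n =>
    n ≤ ((σ ⟨(i : ℕ), by have := i.isLt; omega⟩ : Fin (2 * n)) : ℕ))).card

/-- `I_w = {i ∈ {1,…,n} : w(i) > n}`, as a finset of `Fin n` (0-based). -/
def Iset (n : ℕ) (σ : Equiv.Perm (Fin (2 * n))) : Finset (Fin n) :=
  Finset.univ.filter (fun i : Fin n =>
    n ≤ ((σ ⟨(i : ℕ), by have := i.isLt; omega⟩ : Fin (2 * n)) : ℕ))

/-- The parabolic subgroup `W_{[n-1]}` generated by `s_1, …, s_{n-1}`. -/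
def Wpar (n : ℕ) : Subgroup (Equiv.Perm (Fin (2 * n))) :=
  Subgroup.closure { σ | ∃ i, 1 ≤ i ∧ i ≤ n - 1 ∧ σ = sGen n i }

/-- The standard basis vector `e_i` of `ℝ^{2n}` (with `i : Fin n` 0-based, sitting in
position `i` of the first block). -/
def evec (n : ℕ) (i : Fin n) : Fin (2 * n) → ℝ :=
  Pi.single ⟨(i : ℕ), by have := i.isLt; omega⟩ 1

/-- The standard basis vector `f_j` of `ℝ^{2n}` (position `n + j`). -/
def fvec (n : ℕ) (j : Fin n) : Fin (2 * n) → ℝ :=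
  Pi.single ⟨n + (j : ℕ), by have := j.isLt; omega⟩ 1

/-- `f = ι(f_1)⋯ι(f_n)` in the Clifford algebra. -/
def fElt {n : ℕ} (Q : QuadraticForm ℝ (Fin (2 * n) → ℝ)) : CliffordAlgebra Q :=
  (List.ofFn (fun j : Fin n => CliffordAlgebra.ι Q (fvec n j))).prod

/-- `e_S = ι(e_{l_1})⋯ι(e_{l_s})` where `l_1 < ⋯ < l_s` enumerates `S`. -/
def eProd {n : ℕ} (Q : QuadraticForm ℝ (Fin (2 * n) → ℝ)) (S : Finset (Fin n)) :
    CliffordAlgebra Q :=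
  ((S.sort (· ≤ ·)).map (fun l => CliffordAlgebra.ι Q (evec n l))).prod

/-- `h = Π_{i=1}^n ι(e_i + Σ_j A_{ij} f_j)` (product in increasing order of `i`). -/
def hElt {n : ℕ} (Q : QuadraticForm ℝ (Fin (2 * n) → ℝ)) (A : Matrix (Fin n) (Fin n) ℝ) :
    CliffordAlgebra Q :=
  (List.ofFn (fun i : Fin n =>
    CliffordAlgebra.ι Q (evec n i + ∑ j : Fin n, A i j • fvec n j))).prod

/-- The sorted list of the (1-based) elements of `S ⊆ {1,…,n}`. -/
def valsOf {n : ℕ} (S : Finset (Fin n)) : List ℕ :=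
  (S.sort (· ≤ ·)).map (fun i => (i : ℕ) + 1)

/-- The word `w_1 w_2 ⋯ w_r` where
`w_m = s_n (s_{n-2}⋯s_{i_{2m-1}}) (s_{n-1}⋯s_{i_{2m}})` and `vals` lists `i_1 < i_2 < ⋯`
(1-based); `m` is 0-based here. -/
def uWord (n r : ℕ) (vals : List ℕ) : List ℕ :=
  ((List.range r).map (fun m =>
    n :: (decRun (n - 2) (vals.getD (2 * m) 0) ++ decRun (n - 1) (vals.getD (2 * m + 1) 0)))).flatten

/-- The permutation `u = w_1 w_2 ⋯ w_r`. -/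
def uPerm (n r : ℕ) (vals : List ℕ) : Equiv.Perm (Fin (2 * n)) :=
  ((uWord n r vals).map (sGen n)).prod

/-- `L = r + Σ_{m=1}^{r} ((n-1-i_{2m-1}) + (n-i_{2m}))`. -/
def Lval (n r : ℕ) (vals : List ℕ) : ℕ :=
  r + ∑ m ∈ Finset.range r, ((n - 1 - vals.getD (2 * m) 0) + (n - vals.getD (2 * m + 1) 0))

/-!
Write `A ↦ x_i(s) · A` for the action on `A` obtained by right multiplication of `[Id | A]` by
`x_i(s)`: it is `A ↦ g A gᵀ` with `g = Id - s E_{i,i+1}` if `i < n`, and it adds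
`s (E_{n-1,n} - E_{n,n-1})` if `i = n`. Thus `A(t)` is the result of applying the letters of the
word to the zero matrix.

The first letter `n` produces the bivector `t_1 e_{n-1} ∧ e_n`. The run `n-2, …, 1` carries
`e_{n-1}` down to `e_1`, the run `n-1, …, 2` carries `e_n` down to `e_2`, and the remaining letters
fix the first two coordinates of these vectors while building up, in the last `n - 2` coordinates,
the matrix `A` of size `n - 2`. Hence `A(t) = u vᵀ - v uᵀ + 0 ⊕ A(t')` with `t' = (t_{2n-2}, …)` and
`u_1 v_2 - v_1 u_2 = t_1 ⋯ t_{2n-3}`. Since `u vᵀ - v uᵀ` has rank two, a minor of `A(t)` that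
contains the first two rows and columns equals `(u_1 v_2 - v_1 u_2)²` times the corresponding minor
of `A(t')`, and the formula follows by induction from `n - 2` to `n`.
-/

section LinearAlgebra

variable {R : Type*} [CommRing R]

lemma det_fromRows_mul_fromCols_add {ι κ : Type*} [Fintype ι] [DecidableEq ι] [Fintype κ]
    [DecidableEq κ] (C₁ R₁ : Matrix ι ι R) (C₂ : Matrix κ ι R) (R₂ : Matrix ι κ R)
    (D : Matrix κ κ R) :
    (fromRows C₁ C₂ * fromCols R₁ R₂ + fromBlocks 0 0 0 D).det = C₁.det * R₁.det * D.det := by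
  have factorization : fromRows C₁ C₂ * fromCols R₁ R₂ + fromBlocks 0 0 0 D =
      fromBlocks C₁ 0 C₂ D * fromBlocks R₁ R₂ 0 1 := by
    simp [fromBlocks_multiply, fromBlocks_add]
  rw [factorization, det_mul, det_fromBlocks_zero₁₂, det_fromBlocks_zero₂₁, det_one]
  ring

/-- The alternating rank-two matrix `u vᵀ - v uᵀ` representing the bivector `u ∧ v`. -/
def wedge {ι : Type*} (u v : ι → R) : Matrix ι ι R := vecMulVec u v - vecMulVec v u

lemma wedge_apply {ι : Type*} (u v : ι → R) (p q : ι) :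
    wedge u v p q = u p * v q - v p * u q := rfl

lemma mul_wedge_mul_transpose {ι κ : Type*} [Fintype ι] (M : Matrix κ ι R) (u v : ι → R) :
    M * wedge u v * Mᵀ = wedge (M *ᵥ u) (M *ᵥ v) := by
  simp only [wedge, Matrix.mul_sub, Matrix.sub_mul, mul_vecMulVec, vecMulVec_mul, vecMul_transpose]

/-- The matrix `B` placed in the lower right corner of a zero matrix with two more rows and
columns. -/
def padTwo {m : ℕ} (B : Matrix (Fin m) (Fin m) R) : Matrix (Fin (2 + m)) (Fin (2 + m)) R :=
  reindex finSumFinEquiv finSumFinEquiv (fromBlocks 0 0 0 B)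

lemma padTwo_zero {m : ℕ} : padTwo (0 : Matrix (Fin m) (Fin m) R) = 0 := by
  simp [padTwo]

lemma padTwo_add {m : ℕ} (A B : Matrix (Fin m) (Fin m) R) :
    padTwo (A + B) = padTwo A + padTwo B := by
  ext p q
  refine p.addCases (fun p => ?_) (fun p => ?_) <;>
    refine q.addCases (fun q => ?_) (fun q => ?_) <;> simp [padTwo]

lemma padTwo_castAdd_left {m : ℕ} (B : Matrix (Fin m) (Fin m) R) (a : Fin 2) (q : Fin (2 + m)) :
    padTwo B (Fin.castAdd m a) q = 0 := by
  refine q.addCases (fun b => ?_) (fun b => ?_) <;> simp [padTwo]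

lemma padTwo_castAdd_right {m : ℕ} (B : Matrix (Fin m) (Fin m) R) (p : Fin (2 + m)) (a : Fin 2) :
    padTwo B p (Fin.castAdd m a) = 0 := by
  refine p.addCases (fun b => ?_) (fun b => ?_) <;> simp [padTwo]

lemma padTwo_natAdd_natAdd {m : ℕ} (B : Matrix (Fin m) (Fin m) R) (p q : Fin m) :
    padTwo B (Fin.natAdd 2 p) (Fin.natAdd 2 q) = B p q := by
  simp [padTwo]

/-- The map on indices that fixes `0` and `1` and applies `r` to the indices shifted by two. -/
def extendTwo {k m : ℕ} (r : Fin k → Fin m) : Fin (2 + k) → Fin (2 + m) :=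
  Fin.addCases (Fin.castAdd m) fun p => Fin.natAdd 2 (r p)

lemma det_submatrix_wedge_add_padTwo {m k : ℕ} (u v : Fin (2 + m) → R)
    (B : Matrix (Fin m) (Fin m) R) (r c : Fin k → Fin m) :
    ((wedge u v + padTwo B).submatrix (extendTwo r) (extendTwo c)).det =
      wedge u v (Fin.castAdd m 0) (Fin.castAdd m 1) ^ 2 * (B.submatrix r c).det := by
  have block_form : ((wedge u v + padTwo B).submatrix (extendTwo r) (extendTwo c)).submatrix
        finSumFinEquiv finSumFinEquiv =
      fromRows (of fun a b => ![u (Fin.castAdd m a), v (Fin.castAdd m a)] b)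
          (of fun p b => ![u (Fin.natAdd 2 (r p)), v (Fin.natAdd 2 (r p))] b) *
        fromCols (of fun b a => ![v (Fin.castAdd m a), -u (Fin.castAdd m a)] b)
          (of fun b q => ![v (Fin.natAdd 2 (c q)), -u (Fin.natAdd 2 (c q))] b) +
        fromBlocks 0 0 0 (B.submatrix r c) := by
    ext p q
    rcases p with p | p <;> rcases q with q | q <;>
      simp only [submatrix_apply, finSumFinEquiv_apply_left, finSumFinEquiv_apply_right,
        extendTwo, Fin.addCases_left, Fin.addCases_right, Matrix.add_apply, wedge_apply,
        padTwo_castAdd_left, padTwo_castAdd_right, padTwo_natAdd_natAdd, mul_fromCols,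
        fromRows_mul, fromCols_fromRows_eq_fromBlocks, fromBlocks_apply₁₁, fromBlocks_apply₁₂,
        fromBlocks_apply₂₁, fromBlocks_apply₂₂, mul_apply, of_apply, Fin.sum_univ_two,
        cons_val_zero, cons_val_one, Matrix.zero_apply] <;>
      ring
  rw [← det_submatrix_equiv_self finSumFinEquiv, block_form, det_fromRows_mul_fromCols_add,
    det_fin_two, det_fin_two]
  simp only [of_apply, cons_val_zero, cons_val_one, wedge_apply]
  ring

end LinearAlgebra

section SiegelAction

variable {R : Type*} [CommRing R]

/-- The upper left block of `x_i(s)`: the elementary matrix `Id + s E_{i,i+1}` (1-based) for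
`1 ≤ i < n`, and the identity for every other `i`. -/
def leviGen (n i : ℕ) (s : R) : Matrix (Fin n) (Fin n) R :=
  1 + of fun p q : Fin n => if (p : ℕ) + 1 = i ∧ (q : ℕ) = i then s else 0

/-- The upper right block of `x_i(s)`: zero for `i < n`, and the alternating matrix
`s (E_{n-1,n} - E_{n,n-1})` (1-based) for `i = n`. -/
def unipotentGen (n i : ℕ) (s : R) : Matrix (Fin n) (Fin n) R :=
  of fun p q => if i < n then 0 else
    (if (p : ℕ) + 2 = n ∧ (q : ℕ) + 1 = n then s else 0) -
      (if (p : ℕ) + 1 = n ∧ (q : ℕ) + 2 = n then s else 0)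

/-- The action of `x_i(s)` on alternating matrices `A`, viewed as row spaces of `[Id | A]`; the
pair `x` is `(i, s)`. -/
def siegelAct (n : ℕ) (A : Matrix (Fin n) (Fin n) R) (x : ℕ × R) : Matrix (Fin n) (Fin n) R :=
  leviGen n x.1 (-x.2) * A * (leviGen n x.1 (-x.2))ᵀ + unipotentGen n x.1 x.2

/-- The action of the Levi part of `x_i(s)` on vectors, compatible with `siegelAct` through
`wedge`; the pair `x` is `(i, s)`. -/
def leviAct (n : ℕ) (u : Fin n → R) (x : ℕ × R) : Fin n → R :=
  leviGen n x.1 (-x.2) *ᵥ u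

lemma leviGen_mulVec_apply_of_ne {n i : ℕ} (s : R) (u : Fin n → R) {p : Fin n}
    (h : i ≠ p + 1) : (leviGen n i s *ᵥ u) p = u p := by
  simp [leviGen, mulVec, dotProduct, one_apply, h.symm]

lemma leviGen_mulVec_apply_of_eq_succ {n : ℕ} (s : R) (u : Fin n → R) {p q : Fin n}
    (h : (q : ℕ) = p + 1) : (leviGen n q s *ᵥ u) p = u p + s * u q := by
  simp [leviGen, mulVec, dotProduct, one_apply, add_mul, Finset.sum_add_distrib, h.symm,
    ← Fin.ext_iff]

lemma leviGen_mul_leviGen (n i : ℕ) (s t : R) :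
    leviGen n i s * leviGen n i t = leviGen n i (s + t) := by
  have nilpotent : (of fun p q : Fin n => if (p : ℕ) + 1 = i ∧ (q : ℕ) = i then s else 0) *
      (of fun p q : Fin n => if (p : ℕ) + 1 = i ∧ (q : ℕ) = i then t else 0) = 0 := by
    ext p q
    simp only [mul_apply, of_apply, Matrix.zero_apply]
    exact Finset.sum_eq_zero fun r _ => by grind
  rw [leviGen, leviGen, leviGen, Matrix.add_mul, Matrix.mul_add, Matrix.mul_add, nilpotent]
  ext p q
  simp only [mul_one, one_mul, add_zero, Matrix.add_apply, of_apply]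
  grind

lemma leviGen_zero (n i : ℕ) : leviGen n i (0 : R) = 1 := by
  ext; simp [leviGen]

lemma leviGen_mul_leviGen_neg (n i : ℕ) (s : R) : leviGen n i s * leviGen n i (-s) = 1 := by
  rw [leviGen_mul_leviGen, add_neg_cancel, leviGen_zero]

lemma isUnit_leviGen (n i : ℕ) (s : R) : IsUnit (leviGen n i s) :=
  IsUnit.of_mul_eq_one _ (leviGen_mul_leviGen_neg n i s)

lemma leviGen_of_le {n i : ℕ} (h : n ≤ i) (s : R) : leviGen n i s = 1 := by
  ext p q
  have := q.isLt
  simp [leviGen, show ¬ (q : ℕ) = i by omega]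

lemma unipotentGen_of_lt {n i : ℕ} (h : i < n) (s : R) : unipotentGen n i s = 0 := by
  ext; simp [unipotentGen, h]

lemma leviGen_mul_unipotentGen (n i : ℕ) (s t : R) :
    leviGen n i s * unipotentGen n i t = unipotentGen n i t := by
  rcases lt_or_ge i n with h | h
  · rw [unipotentGen_of_lt h, Matrix.mul_zero]
  · rw [leviGen_of_le h, Matrix.one_mul]

lemma leviGen_add_two (m : ℕ) {i : ℕ} (hi : 1 ≤ i) (s : R) :
    leviGen (2 + m) (i + 2) s =
      reindex finSumFinEquiv finSumFinEquiv (fromBlocks 1 0 0 (leviGen m i s)) := by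
  ext p q
  refine p.addCases (fun p => ?_) (fun p => ?_) <;>
    refine q.addCases (fun q => ?_) (fun q => ?_) <;>
    simp only [leviGen, Matrix.add_apply, one_apply, of_apply, Fin.ext_iff, Fin.val_castAdd,
      Fin.val_natAdd, reindex_apply, submatrix_apply, finSumFinEquiv_symm_apply_castAdd,
      finSumFinEquiv_symm_apply_natAdd, fromBlocks_apply₁₁, fromBlocks_apply₁₂,
      fromBlocks_apply₂₁, fromBlocks_apply₂₂, Matrix.zero_apply] <;>
    grind

lemma unipotentGen_add_two {m : ℕ} (hm : 2 ≤ m) (i : ℕ) (s : R) :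
    unipotentGen (2 + m) (i + 2) s = padTwo (unipotentGen m i s) := by
  ext p q
  refine p.addCases (fun p => ?_) (fun p => ?_) <;>
    refine q.addCases (fun q => ?_) (fun q => ?_) <;>
    simp only [padTwo_castAdd_left, padTwo_castAdd_right, padTwo_natAdd_natAdd, unipotentGen,
      of_apply, Fin.val_castAdd, Fin.val_natAdd] <;>
    grind

lemma siegelAct_padTwo {m : ℕ} (hm : 2 ≤ m) (B : Matrix (Fin m) (Fin m) R) {i : ℕ} (hi : 1 ≤ i)
    (s : R) : siegelAct (2 + m) (padTwo B) (i + 2, s) = padTwo (siegelAct m B (i, s)) := by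
  have conjugate : leviGen (2 + m) (i + 2) (-s) * padTwo B * (leviGen (2 + m) (i + 2) (-s))ᵀ =
      padTwo (leviGen m i (-s) * B * (leviGen m i (-s))ᵀ) := by
    simp [leviGen_add_two m hi, padTwo, fromBlocks_transpose, fromBlocks_multiply]
  rw [siegelAct, siegelAct, padTwo_add, conjugate, unipotentGen_add_two hm]

lemma siegelAct_wedge_add (n : ℕ) (u v : Fin n → R) (A : Matrix (Fin n) (Fin n) R) (x : ℕ × R) :
    siegelAct n (wedge u v + A) x = wedge (leviAct n u x) (leviAct n v x) + siegelAct n A x := by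
  simp only [siegelAct, leviAct, Matrix.mul_add, Matrix.add_mul, mul_wedge_mul_transpose, add_assoc]

lemma siegelAct_zero_of_lt {n : ℕ} {x : ℕ × R} (hx : x.1 < n) : siegelAct n 0 x = 0 := by
  simp [siegelAct, unipotentGen_of_lt hx]

lemma siegelAct_zero_last (m : ℕ) (s : R) :
    siegelAct (2 + m) 0 (2 + m, s) =
      wedge (Pi.single ⟨m, by omega⟩ s) (Pi.single ⟨m + 1, by omega⟩ 1) := by
  ext p q
  simp only [siegelAct, Matrix.mul_zero, Matrix.zero_mul, zero_add, unipotentGen, of_apply,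
    wedge_apply, Pi.single_apply, Fin.ext_iff]
  grind

lemma foldl_siegelAct_wedge_add {n : ℕ} (w : List (ℕ × R)) (u v : Fin n → R)
    (A : Matrix (Fin n) (Fin n) R) :
    w.foldl (siegelAct n) (wedge u v + A) =
      wedge (w.foldl (leviAct n) u) (w.foldl (leviAct n) v) + w.foldl (siegelAct n) A := by
  induction w generalizing u v A with
  | nil => rfl
  | cons x w ih => simp only [List.foldl_cons, siegelAct_wedge_add, ih]

lemma foldl_siegelAct_zero {n : ℕ} {w : List (ℕ × R)} (hw : ∀ x ∈ w, x.1 < n) :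
    w.foldl (siegelAct n) 0 = 0 := by
  induction w with
  | nil => rfl
  | cons x w ih =>
    rw [List.forall_mem_cons] at hw
    rw [List.foldl_cons, siegelAct_zero_of_lt hw.1, ih hw.2]

lemma foldl_siegelAct_padTwo {m : ℕ} (hm : 2 ≤ m) {w : List (ℕ × R)} (hw : ∀ x ∈ w, 1 ≤ x.1)
    (B : Matrix (Fin m) (Fin m) R) :
    (w.map (Prod.map (· + 2) id)).foldl (siegelAct (2 + m)) (padTwo B) =
      padTwo (w.foldl (siegelAct m) B) := by
  induction w generalizing B with
  | nil => rfl
  | cons x w ih =>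
    rw [List.forall_mem_cons] at hw
    simp only [List.map_cons, List.foldl_cons]
    rw [← ih hw.2, ← siegelAct_padTwo hm B hw.1]
    rfl

lemma foldl_leviAct_apply_of_forall_ne {n : ℕ} {w : List (ℕ × R)} {p : Fin n}
    (hw : ∀ x ∈ w, x.1 ≠ p + 1) (u : Fin n → R) : w.foldl (leviAct n) u p = u p := by
  induction w generalizing u with
  | nil => rfl
  | cons x w ih =>
    rw [List.forall_mem_cons] at hw
    rw [List.foldl_cons, ih hw.2, leviAct, leviGen_mulVec_apply_of_ne _ _ hw.1]

lemma leviAct_single_of_ne {n : ℕ} {x : ℕ × R} {q : Fin n} (h : x.1 ≠ q) (a : R) :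
    leviAct n (Pi.single q a) x = Pi.single q a := by
  ext p
  simp [leviAct, leviGen, one_apply, Pi.single_apply, h.symm]

lemma foldl_leviAct_single_of_forall_ne {n : ℕ} {w : List (ℕ × R)} {q : Fin n}
    (hw : ∀ x ∈ w, x.1 ≠ q) (a : R) :
    w.foldl (leviAct n) (Pi.single q a) = Pi.single q a := by
  induction w with
  | nil => rfl
  | cons x w ih =>
    rw [List.forall_mem_cons] at hw
    rw [List.foldl_cons, leviAct_single_of_ne hw.1, ih hw.2]

end SiegelAction

section Words

variable {R : Type*}

/-- The word `w` with its letters paired with the successive values of `t`. -/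
def weightedWord (t : ℕ → R) (w : List ℕ) : List (ℕ × R) := w.mapIdx fun l i => (i, t l)

lemma weightedWord_cons (t : ℕ → R) (i : ℕ) (w : List ℕ) :
    weightedWord t (i :: w) = (i, t 0) :: weightedWord (fun l => t (l + 1)) w :=
  List.mapIdx_cons

lemma weightedWord_append (t : ℕ → R) (w₁ w₂ : List ℕ) :
    weightedWord t (w₁ ++ w₂) =
      weightedWord t w₁ ++ weightedWord (fun l => t (l + w₁.length)) w₂ :=
  List.mapIdx_append

lemma weightedWord_map (t : ℕ → R) (f : ℕ → ℕ) (w : List ℕ) :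
    weightedWord t (w.map f) = (weightedWord t w).map (Prod.map f id) := by
  refine List.ext_getElem (by simp [weightedWord]) fun l _ _ => ?_
  simp [weightedWord]

lemma fst_mem_of_mem_weightedWord {t : ℕ → R} {w : List ℕ} {x : ℕ × R}
    (hx : x ∈ weightedWord t w) : x.1 ∈ w := by
  obtain ⟨l, hl, rfl⟩ := List.mem_mapIdx.1 hx
  exact List.getElem_mem hl

lemma mem_decRun {a b i : ℕ} : i ∈ decRun a b ↔ b ≤ i ∧ i ≤ a := by
  simp only [decRun, List.mem_reverse, List.mem_range'_1]
  omega

lemma length_decRun (a b : ℕ) : (decRun a b).length = a + 1 - b := by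
  simp [decRun]

lemma decRun_eq_append_singleton {a b : ℕ} (h : b ≤ a) :
    decRun a b = decRun a (b + 1) ++ [b] := by
  rw [decRun, decRun, show a + 1 - b = a + 1 - (b + 1) + 1 by omega, List.range'_succ,
    List.reverse_cons]

lemma decRun_add_right (a b c : ℕ) : decRun (a + c) (b + c) = (decRun a b).map (· + c) := by
  rw [decRun, decRun, List.map_reverse, show a + c + 1 - (b + c) = a + 1 - b by omega,
    add_comm b c, ← List.map_add_range']
  simp only [add_comm c]

lemma wordD_two_add (m : ℕ) :
    wordD (2 + m) =
      (2 + m) :: (decRun m 1 ++ (decRun (m + 1) 2 ++ (wordD m).map (· + 2))) := by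
  have first_block : (2 + m) :: (decRun (2 + m - 2) (2 * 0 + 1) ++ decRun (2 + m - 1) (2 * 0 + 2)) =
      (2 + m) :: (decRun m 1 ++ decRun (m + 1) 2) := by
    rw [Nat.add_sub_cancel_left, show 2 + m - 1 = m + 1 by omega]
  have later_blocks : ∀ j ∈ List.range (m / 2),
      (2 + m) :: (decRun (2 + m - 2) (2 * (j + 1) + 1) ++
          decRun (2 + m - 1) (2 * (j + 1) + 2)) =
        (m :: (decRun (m - 2) (2 * j + 1) ++ decRun (m - 1) (2 * j + 2))).map (· + 2) := by
    intro j hj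
    have hm : 2 ≤ m := by
      have := List.mem_range.1 hj
      omega
    have run₁ := decRun_add_right (m - 2) (2 * j + 1) 2
    have run₂ := decRun_add_right (m - 1) (2 * j + 2) 2
    grind
  rw [wordD, show (2 + m) / 2 = m / 2 + 1 by omega, List.range_succ_eq_map, List.map_cons,
    List.flatten_cons, List.map_map, wordD, List.map_flatten, List.map_map,
    ← List.append_assoc, ← List.cons_append]
  exact congrArg₂ (· ++ ·) first_block (congrArg List.flatten (List.map_congr_left later_blocks))

lemma Npar_two_add (m : ℕ) : Npar (2 + m) = 2 * m + 1 + Npar m := by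
  have twice : (2 + m) * (2 + m - 1) = m * (m - 1) + (2 * m + 1) * 2 := by
    cases m with
    | zero => rfl
    | succ m => rw [Nat.add_sub_cancel, ← add_assoc, Nat.add_sub_cancel]; ring
  rw [Npar, Npar, twice, Nat.add_mul_div_right _ _ two_pos, add_comm]

lemma length_wordD (n : ℕ) : (wordD n).length = Npar n := by
  induction n using Nat.twoStepInduction with
  | zero => rfl
  | one => rfl
  | more m ih _ =>
    rw [add_comm m 2, wordD_two_add, Npar_two_add]
    simp only [List.length_cons, List.length_append, List.length_map, length_decRun, ih]
    omega

lemma one_le_of_mem_wordD {n i : ℕ} (hi : i ∈ wordD n) : 1 ≤ i := by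
  simp only [wordD, List.mem_flatten, List.mem_map, List.mem_range] at hi
  obtain ⟨_, ⟨m, hm, rfl⟩, hi⟩ := hi
  simp only [List.mem_cons, List.mem_append, mem_decRun] at hi
  omega

lemma foldl_leviAct_decRun_apply [CommRing R] {n a b : ℕ} (hab : b ≤ a) (ha : a < n) (t : ℕ → R)
    {u : Fin n → R} (hu : ∀ p : Fin n, b ≤ p → p < a → u p = 0) :
    (weightedWord t (decRun a (b + 1))).foldl (leviAct n) u ⟨b, by omega⟩ =
      u ⟨a, ha⟩ * ∏ j ∈ Finset.range (a - b), -t j := by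
  induction hab using Nat.decreasingInduction with
  | self => simp [decRun, weightedWord]
  | of_succ b hb ih =>
    have untouched : (weightedWord t (decRun a (b + 2))).foldl (leviAct n) u ⟨b, by omega⟩ = 0 := by
      rw [foldl_leviAct_apply_of_forall_ne, hu _ le_rfl hb]
      intro x hx
      have := mem_decRun.1 (fst_mem_of_mem_weightedWord hx)
      grind
    have run_above : (weightedWord t (decRun a (b + 2))).foldl (leviAct n) u ⟨b + 1, by omega⟩ =
        u ⟨a, ha⟩ * ∏ j ∈ Finset.range (a - (b + 1)), -t j :=
      ih fun p hp => hu p (by omega)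
    have last_letter : weightedWord (fun l => t (l + (decRun a (b + 2)).length)) [b + 1] =
        [(b + 1, t (a - (b + 1)))] := by
      simp [weightedWord, length_decRun]
    rw [decRun_eq_append_singleton (by omega), weightedWord_append, last_letter,
      List.foldl_append, List.foldl_cons, List.foldl_nil, leviAct,
      leviGen_mulVec_apply_of_eq_succ (q := ⟨b + 1, by omega⟩) _ _ rfl, untouched, run_above,
      show a - b = a - (b + 1) + 1 by omega, Finset.prod_range_succ]
    ring

end Words

section Blocks

/-- The identification of the rows of the two `n × n` blocks with those of a `2n × 2n` matrix. -/
def blockEquiv (n : ℕ) : Fin n ⊕ Fin n ≃ Fin (2 * n) :=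
  finSumFinEquiv.trans (finCongr (two_mul n).symm)

lemma xMat_submatrix_blockEquiv {n i : ℕ} (hn : 2 ≤ n) (hi : 1 ≤ i) (s : ℝ) :
    (xMat n i s).submatrix (blockEquiv n) (blockEquiv n) =
      fromBlocks (leviGen n i s) (unipotentGen n i s) 0 (leviGen n i (-s))ᵀ := by
  ext p q
  rcases p with p | p <;> rcases q with q | q <;>
    simp only [xMat, blockEquiv, leviGen, unipotentGen, submatrix_apply, Equiv.trans_apply,
      finSumFinEquiv_apply_left, finSumFinEquiv_apply_right, finCongr_apply, of_apply,
      Fin.val_cast, Fin.val_castAdd, Fin.val_natAdd, fromBlocks_apply₁₁, fromBlocks_apply₁₂,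
      fromBlocks_apply₂₁, fromBlocks_apply₂₂, transpose_apply, Matrix.add_apply,
      Matrix.zero_apply, one_apply, Fin.ext_iff] <;>
    grind

lemma fromBlocks_mul_generator {R : Type*} [CommRing R] {n : ℕ} (G A H : Matrix (Fin n) (Fin n) R)
    (x : ℕ × R) :
    fromBlocks G (G * A) 0 H *
        fromBlocks (leviGen n x.1 x.2) (unipotentGen n x.1 x.2) 0 (leviGen n x.1 (-x.2))ᵀ =
      fromBlocks (G * leviGen n x.1 x.2) (G * leviGen n x.1 x.2 * siegelAct n A x) 0
        (H * (leviGen n x.1 (-x.2))ᵀ) := by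
  have upper_right : G * unipotentGen n x.1 x.2 + G * A * (leviGen n x.1 (-x.2))ᵀ =
      G * leviGen n x.1 x.2 * siegelAct n A x := by
    calc _ = G * (leviGen n x.1 x.2 * unipotentGen n x.1 x.2) +
          G * (leviGen n x.1 x.2 * leviGen n x.1 (-x.2)) * A * (leviGen n x.1 (-x.2))ᵀ := by
          rw [leviGen_mul_unipotentGen, leviGen_mul_leviGen_neg, Matrix.mul_one]
      _ = _ := by
          rw [siegelAct]
          noncomm_ring
  simp [fromBlocks_multiply, upper_right]

lemma exists_prod_xMat_eq_fromBlocks {n : ℕ} (hn : 2 ≤ n) {w : List (ℕ × ℝ)}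
    (hw : ∀ x ∈ w, 1 ≤ x.1) :
    ∃ G H : Matrix (Fin n) (Fin n) ℝ, IsUnit G ∧
      (w.map fun x => xMat n x.1 x.2).prod.submatrix (blockEquiv n) (blockEquiv n) =
        fromBlocks G (G * w.foldl (siegelAct n) 0) 0 H := by
  induction w using List.reverseRecOn with
  | nil => exact ⟨1, 1, isUnit_one, by simp⟩
  | append_singleton w x ih =>
    rw [List.forall_mem_append, List.forall_mem_singleton] at hw
    obtain ⟨G, H, hG, hprod⟩ := ih hw.1
    refine ⟨G * leviGen n x.1 x.2, H * (leviGen n x.1 (-x.2))ᵀ,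
      hG.mul (isUnit_leviGen n x.1 x.2), ?_⟩
    rw [List.map_append, List.prod_append, List.map_singleton, List.prod_singleton,
      ← submatrix_mul_equiv _ _ _ (blockEquiv n), hprod, xMat_submatrix_blockEquiv hn hw.2,
      fromBlocks_mul_generator, List.foldl_append, List.foldl_cons, List.foldl_nil]

lemma prodX_eq_prod_weightedWord (n : ℕ) (t : ℕ → ℝ) :
    prodX n t = ((weightedWord t (wordD n)).map fun x => xMat n x.1 x.2).prod := by
  rw [prodX, ← length_wordD]
  congr 1
  refine List.ext_getElem (by simp [weightedWord]) fun l hl _ => ?_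
  have : l < (wordD n).length := by simpa using hl
  simp [weightedWord, this]

lemma Amat_eq_foldl_siegelAct {n : ℕ} (hn : 2 ≤ n) (t : ℕ → ℝ) :
    Amat n t = (weightedWord t (wordD n)).foldl (siegelAct n) 0 := by
  obtain ⟨G, H, hG, hprod⟩ := exists_prod_xMat_eq_fromBlocks hn
    (fun x hx => one_le_of_mem_wordD (fst_mem_of_mem_weightedWord (t := t) hx))
  rw [← prodX_eq_prod_weightedWord] at hprod
  have hX1 : X1 n t = G := by
    ext p q
    exact congr_fun₂ hprod (Sum.inl p) (Sum.inl q)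
  have hX2 : X2 n t = G * (weightedWord t (wordD n)).foldl (siegelAct n) 0 := by
    ext p q
    exact congr_fun₂ hprod (Sum.inl p) (Sum.inr q)
  rw [Amat, hX1, hX2, nonsing_inv_mul_cancel_left _ _ ((isUnit_iff_isUnit_det G).1 hG)]

lemma Mminor_one_one_eq_neg_det {n : ℕ} (A : Matrix (Fin (n + 2)) (Fin (n + 2)) ℝ) :
    Mminor (n + 2) 1 1 A =
      -(A.submatrix (Fin.last n).castSucc.succAbove Fin.castSucc).det := by
  rw [Mminor, mul_one, pow_one, neg_one_mul]
  rfl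

end Blocks

lemma Mminor_one_one_wedge_add_padTwo {k : ℕ} (u v : Fin (2 + (k + 2)) → ℝ)
    (B : Matrix (Fin (k + 2)) (Fin (k + 2)) ℝ) :
    Mminor (2 + (k + 2)) 1 1 (wedge u v + padTwo B) =
      wedge u v (Fin.castAdd (k + 2) 0) (Fin.castAdd (k + 2) 1) ^ 2 * Mminor (k + 2) 1 1 B := by
  have rows : (Fin.last (2 + k)).castSucc.succAbove =
      extendTwo (Fin.last k).castSucc.succAbove := by
    funext p
    refine p.addCases (m := 2) (n := k + 1) (fun a => ?_) (fun b => ?_) <;> ext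
    · simp only [extendTwo, Fin.addCases_left, Fin.succAbove, Fin.lt_def, Fin.val_castSucc,
        Fin.val_castAdd, Fin.val_last]
      grind
    · simp only [extendTwo, Fin.addCases_right, Fin.succAbove, Fin.lt_def, Fin.val_castSucc,
        Fin.val_natAdd, Fin.val_last, add_lt_add_iff_left]
      split_ifs
      · rfl
      · exact add_assoc 2 (b : ℕ) 1
  have columns : (Fin.castSucc : Fin (2 + k + 1) → Fin (2 + k + 2)) =
      extendTwo (Fin.castSucc : Fin (k + 1) → Fin (k + 2)) := by
    funext q
    refine q.addCases (m := 2) (n := k + 1) (fun a => ?_) (fun b => ?_) <;>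
      ext <;> simp [extendTwo]
  rw [Mminor_one_one_eq_neg_det B, mul_neg]
  refine (Mminor_one_one_eq_neg_det (n := 2 + k) _).trans (congrArg Neg.neg ?_)
  rw [rows, columns]
  exact det_submatrix_wedge_add_padTwo u v B _ _

lemma Mminor_one_one_Amat_two (t : ℕ → ℝ) : Mminor 2 1 1 (Amat 2 t) = t 0 := by
  rw [Amat_eq_foldl_siegelAct le_rfl, Mminor_one_one_eq_neg_det,
    show wordD 2 = [2] by rfl]
  simp [weightedWord, siegelAct, unipotentGen]

lemma Amat_three (t : ℕ → ℝ) :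
    Amat 3 t = !![0, t 0 * t 1 * t 2, -(t 0 * t 1);
      -(t 0 * t 1 * t 2), 0, t 0;
      t 0 * t 1, -t 0, 0] := by
  rw [Amat_eq_foldl_siegelAct (by omega), show wordD 3 = [3, 1, 2] by rfl]
  ext p q
  fin_cases p <;> fin_cases q <;>
    simp [weightedWord, siegelAct, unipotentGen, leviGen, mul_apply, Fin.sum_univ_three,
      one_apply, mul_comm]

lemma Mminor_one_one_Amat_three (t : ℕ → ℝ) :
    Mminor 3 1 1 (Amat 3 t) = (t 0 * t 1) ^ 2 * t 2 := by
  rw [Amat_three, Mminor_one_one_eq_neg_det, det_fin_two]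
  simp [Fin.succAbove, pow_two, mul_assoc, mul_comm, mul_left_comm]

section Recursion

variable {R : Type*} [CommRing R]

lemma foldl_leviAct_runs_single_apply_zero (m : ℕ) (t : ℕ → R) (a : R) {w : List ℕ}
    (hw : ∀ i ∈ w, 3 ≤ i) :
    (weightedWord t (decRun m 1 ++ (decRun (m + 1) 2 ++ w))).foldl (leviAct (2 + m))
        (Pi.single ⟨m, by omega⟩ a) (Fin.castAdd m 0) = a * ∏ j ∈ Finset.range m, -t j := by
  rw [weightedWord_append, List.foldl_append, foldl_leviAct_apply_of_forall_ne]
  · refine (foldl_leviAct_decRun_apply (Nat.zero_le m) (by omega) t fun p _ hp =>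
      by simp [Fin.ext_iff, hp.ne]).trans ?_
    rw [Pi.single_eq_same, Nat.sub_zero]
  · intro x hx
    have := fst_mem_of_mem_weightedWord hx
    grind [mem_decRun]

lemma foldl_leviAct_runs_single_succ (m : ℕ) (t : ℕ → R) (a : R) (w : List ℕ) :
    (weightedWord t (decRun m 1 ++ w)).foldl (leviAct (2 + m)) (Pi.single ⟨m + 1, by omega⟩ a) =
      (weightedWord (fun l => t (l + m)) w).foldl (leviAct (2 + m))
        (Pi.single ⟨m + 1, by omega⟩ a) := by
  rw [weightedWord_append, List.foldl_append, foldl_leviAct_single_of_forall_ne, length_decRun,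
    Nat.add_sub_cancel]
  intro x hx
  have := mem_decRun.1 (fst_mem_of_mem_weightedWord hx)
  grind

lemma foldl_leviAct_runs_single_succ_apply_zero (m : ℕ) (t : ℕ → R) (a : R) {w : List ℕ}
    (hw : ∀ i ∈ w, 3 ≤ i) :
    (weightedWord t (decRun m 1 ++ (decRun (m + 1) 2 ++ w))).foldl (leviAct (2 + m))
        (Pi.single ⟨m + 1, by omega⟩ a) (Fin.castAdd m 0) = 0 := by
  rw [foldl_leviAct_runs_single_succ, foldl_leviAct_apply_of_forall_ne]
  · simp [Fin.ext_iff]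
  · intro x hx
    have := fst_mem_of_mem_weightedWord hx
    grind [mem_decRun]

lemma foldl_leviAct_runs_single_succ_apply_one (m : ℕ) (t : ℕ → R) (a : R) {w : List ℕ}
    (hw : ∀ i ∈ w, 3 ≤ i) :
    (weightedWord t (decRun m 1 ++ (decRun (m + 1) 2 ++ w))).foldl (leviAct (2 + m))
        (Pi.single ⟨m + 1, by omega⟩ a) (Fin.castAdd m 1) =
      a * ∏ j ∈ Finset.range m, -t (j + m) := by
  rw [foldl_leviAct_runs_single_succ, weightedWord_append, List.foldl_append,
    foldl_leviAct_apply_of_forall_ne]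
  · refine (foldl_leviAct_decRun_apply (Nat.le_add_left 1 m) (by omega) _ fun p _ hp =>
      by simp [Fin.ext_iff, hp.ne]).trans ?_
    rw [Pi.single_eq_same, Nat.add_sub_cancel]
  · intro x hx
    have := fst_mem_of_mem_weightedWord hx
    grind

lemma wedge_foldl_leviAct_runs_apply (m : ℕ) (t : ℕ → R) (a : R) {w : List ℕ}
    (hw : ∀ i ∈ w, 3 ≤ i) :
    wedge
        ((weightedWord t (decRun m 1 ++ (decRun (m + 1) 2 ++ w))).foldl (leviAct (2 + m))
          (Pi.single ⟨m, by omega⟩ a))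
        ((weightedWord t (decRun m 1 ++ (decRun (m + 1) 2 ++ w))).foldl (leviAct (2 + m))
          (Pi.single ⟨m + 1, by omega⟩ 1)) (Fin.castAdd m 0) (Fin.castAdd m 1) =
      a * ∏ j ∈ Finset.range (2 * m), t j := by
  rw [wedge_apply, foldl_leviAct_runs_single_apply_zero m t a hw,
    foldl_leviAct_runs_single_succ_apply_zero m t 1 hw,
    foldl_leviAct_runs_single_succ_apply_one m t 1 hw, zero_mul, sub_zero, one_mul, mul_assoc,
    two_mul, Finset.prod_range_add]
  simp only [Finset.prod_neg, Finset.card_range, add_comm m]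
  rw [mul_mul_mul_comm, ← mul_pow, neg_one_mul, neg_neg, one_pow, one_mul]

lemma foldl_siegelAct_runs_zero {m : ℕ} (hm : 2 ≤ m) (t : ℕ → R) {w : List ℕ}
    (hw : ∀ i ∈ w, 1 ≤ i) :
    (weightedWord t (decRun m 1 ++ (decRun (m + 1) 2 ++ w.map (· + 2)))).foldl
        (siegelAct (2 + m)) 0 =
      padTwo ((weightedWord (fun l => t (l + 2 * m)) w).foldl (siegelAct m) 0) := by
  have runs_lt : ∀ x ∈ weightedWord t (decRun m 1 ++ decRun (m + 1) 2), x.1 < 2 + m := by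
    intro x hx
    have := fst_mem_of_mem_weightedWord hx
    grind [mem_decRun]
  have length_runs : (decRun m 1 ++ decRun (m + 1) 2).length = 2 * m := by
    rw [List.length_append, length_decRun, length_decRun]
    omega
  rw [← List.append_assoc, weightedWord_append, List.foldl_append, foldl_siegelAct_zero runs_lt,
    length_runs, weightedWord_map, ← padTwo_zero, foldl_siegelAct_padTwo hm]
  exact fun x hx => hw _ (fst_mem_of_mem_weightedWord hx)

end Recursion

lemma Amat_two_add {m : ℕ} (hm : 2 ≤ m) (t : ℕ → ℝ) :
    ∃ u v : Fin (2 + m) → ℝ,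
      wedge u v (Fin.castAdd m 0) (Fin.castAdd m 1) = ∏ j ∈ Finset.range (2 * m + 1), t j ∧
      Amat (2 + m) t = wedge u v + padTwo (Amat m fun l => t (l + (2 * m + 1))) := by
  have tail_ge : ∀ i ∈ (wordD m).map (· + 2), 3 ≤ i :=
    List.forall_mem_map.2 fun _ hi => Nat.add_le_add_right (one_le_of_mem_wordD hi) 2
  rw [Amat_eq_foldl_siegelAct (by omega), Amat_eq_foldl_siegelAct hm, wordD_two_add,
    weightedWord_cons, List.foldl_cons, siegelAct_zero_last, ← add_zero (wedge _ _),
    foldl_siegelAct_wedge_add, foldl_siegelAct_runs_zero hm _ fun _ => one_le_of_mem_wordD,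
    Finset.prod_range_succ', mul_comm]
  exact ⟨_, _, wedge_foldl_leviAct_runs_apply m _ (t 0) tail_ge, rfl⟩

/-- `M_{1,1}(A(t)) = (Π_{i=1}^{N-1} t_i²) · t_N`. -/
theorem Mminor_one_one (n : ℕ) (hn : 2 ≤ n) (t : ℕ → ℝ) :
    Mminor n 1 1 (Amat n t) =
      (∏ i ∈ Finset.range (Npar n - 1), t i ^ 2) * t (Npar n - 1) := by
  obtain ⟨k, rfl⟩ := Nat.exists_eq_add_of_le' hn
  clear hn
  induction k using Nat.twoStepInduction generalizing t with
  | zero => simp [Mminor_one_one_Amat_two, Npar]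
  | one => simp [Mminor_one_one_Amat_three, Npar, Finset.prod_range_succ, mul_pow]
  | more k ih _ =>
    obtain ⟨u, v, huv, hA⟩ := Amat_two_add (Nat.le_add_left 2 k) t
    have last_index : Npar (2 + (k + 2)) - 1 = 2 * (k + 2) + 1 + (Npar (k + 2) - 1) := by
      have := Npar_two_add k
      rw [Npar_two_add]
      grind
    rw [show k + 2 + 2 = 2 + (k + 2) by omega, hA, Mminor_one_one_wedge_add_padTwo, huv, ih,
      last_index, Finset.prod_range_add _ (2 * (k + 2) + 1), mul_assoc]
    simp only [Finset.prod_pow, add_comm]
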